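/- Let U₁ be the ℂ-algebra generated by x, y, z subject to xy = yx + 2z + 1/2, yz = zy − y, zx = xz − x, and let p = z² − (1/2)z − yx, which is central in U₁. Then U₁ is 1-homogeneous: for each integer d ≥ 1 there is, up to isomorphism, exactly one simple left U₁-module of ℂ-dimension d, and it is annihilated by p − σ_d, where σ_d = (4d² − 1)/16. -/

import Mathlib

noncomputable section

/-- Generators of the free algebra on `x, y, z` (indices `0, 1, 2`). -/
def F3 (i : Fin 3) : FreeAlgebra ℂ (Fin 3) := FreeAlgebra.ι ℂ i

/-- Simplicity of the representation of a ℂ-algebra `R` on `ℂ^d` given by an algebra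
homomorphism `ρ : R → End ℂ (ℂ^d)`: the corresponding `R`-module is nonzero and has no
nontrivial submodules. -/
def SimpleRep (R : Type*) [Ring R] [Algebra ℂ R] (d : ℕ)
    (ρ : R →ₐ[ℂ] Module.End ℂ (Fin d → ℂ)) : Prop :=
  (∃ v : Fin d → ℂ, v ≠ 0) ∧
    ∀ V : Submodule ℂ (Fin d → ℂ), (∀ a : R, ∀ v ∈ V, ρ a v ∈ V) → V = ⊥ ∨ V = ⊤

/-- The defining relations of `U₁`:
`xy = yx + 2z + 1/2`, `yz = zy − y`, `zx = xz − x`. -/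
inductive U1Rel : FreeAlgebra ℂ (Fin 3) → FreeAlgebra ℂ (Fin 3) → Prop
  | rel_xy : U1Rel (F3 0 * F3 1) (F3 1 * F3 0 + 2 * F3 2 + (1/2 : ℂ) • 1)
  | rel_yz : U1Rel (F3 1 * F3 2) (F3 2 * F3 1 - F3 1)
  | rel_zx : U1Rel (F3 2 * F3 0) (F3 0 * F3 2 - F3 0)

/-- The algebra `U₁`. -/
abbrev U1 : Type := RingQuot U1Rel

def U1x : U1 := RingQuot.mkAlgHom ℂ U1Rel (F3 0)
def U1y : U1 := RingQuot.mkAlgHom ℂ U1Rel (F3 1)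
def U1z : U1 := RingQuot.mkAlgHom ℂ U1Rel (F3 2)

/-- The central element `p = z² − (1/2)z − yx` of `U₁`. -/
def U1p : U1 := U1z * U1z - (1/2 : ℂ) • U1z - U1y * U1x

/-!
With `h = 2z + 1/2`, `e = y` and `f = -x` the defining relations of `U₁` become those of the
enveloping algebra of `sl₂`, so in an irreducible `d`-dimensional representation the images under
`f ^ k` of a highest weight vector `v` satisfy `e (f ^ k v) = k (d - k) f ^ (k - 1) v`. The first
`d` of them form a basis on which `e` and `f` act by formulas depending only on `d`, which gives
uniqueness. Conversely these formulas define a representation on `ℂ ^ d`. It is irreducible, because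
raising a nonzero vector of an invariant subspace as often as possible ends in the kernel of `e`,
that is, at a multiple of the highest weight vector. Finally `p = C / 4 + 3 / 16` for the Casimir
element `C = 4ef + h² - 2h`, which acts by `d² - 1`.
-/

open Module Submodule

section CommRing

variable {R : Type*} [CommRing R]
variable {M : Type*} [AddCommGroup M] [Module R M]
variable {M' : Type*} [AddCommGroup M'] [Module R M']

/-- The space `M` is irreducible under the pair of operators `e`, `f`: it is nonzero, and no proper
nonzero subspace is invariant under both. For an `sl₂`-action it is enough to look at `e` and `f`,
since `h = ⁅e, f⁆`. -/
def ActIrreducibly (e f : End R M) : Prop :=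
  Nontrivial M ∧ ∀ N ∈ e.invtSubmodule ⊓ f.invtSubmodule, N = ⊥ ∨ N = ⊤

theorem ActIrreducibly.span_range_eq_top {e f : End R M} (h : ActIrreducibly e f) {u : ℕ → M}
    (hu : u 0 ≠ 0) (he : ∀ k, e (u k) ∈ span R (Set.range u))
    (hf : ∀ k, f (u k) ∈ span R (Set.range u)) : span R (Set.range u) = ⊤ := by
  refine (h.2 _ ⟨?_, ?_⟩).resolve_left fun hbot => hu ?_
  · exact span_le.mpr (Set.range_subset_iff.mpr he)
  · exact span_le.mpr (Set.range_subset_iff.mpr hf)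
  · exact (mem_bot R).mp (hbot ▸ subset_span ⟨0, rfl⟩)

/-- The sequence `u 0, u 1, …` is the weight basis of a `d`-dimensional highest weight
representation of `sl₂`, irreducible in characteristic zero, in which `e` and `f` are the raising
and lowering operators; it is prolonged by `u k = 0` for `d ≤ k`. In `e_apply` the truncated
subtraction `0 - 1` is harmless, its coefficient being `0`. -/
structure IsSl2String (e f : End R M) (d : ℕ) (u : ℕ → M) : Prop where
  e_apply : ∀ k : ℕ, e (u k) = (k * (d - k) : R) • u (k - 1)
  f_apply : ∀ k, f (u k) = u (k + 1)
  ne_zero : ∀ k < d, u k ≠ 0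
  eq_zero : ∀ k, d ≤ k → u k = 0
  span_range : span R (Set.range u) = ⊤

namespace IsSl2String

variable {e f : End R M} {d : ℕ} {u : ℕ → M}

theorem hom_ext (hu : IsSl2String e f d u) {g g' : M →ₗ[R] M'} (h : ∀ k, g (u k) = g' (u k)) :
    g = g' :=
  LinearMap.ext_on_range hu.span_range h

theorem f_mul_e_apply (hu : IsSl2String e f d u) (k : ℕ) :
    (f * e) (u k) = (k * (d - k) : R) • u k := by
  rw [End.mul_apply, hu.e_apply, map_smul, hu.f_apply]
  cases k with
  | zero => simp
  | succ k => rw [Nat.add_sub_cancel]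

theorem lie_apply (hu : IsSl2String e f d u) (k : ℕ) :
    ⁅e, f⁆ (u k) = (d - 1 - 2 * k : R) • u k := by
  rw [Ring.lie_def, LinearMap.sub_apply, End.mul_apply, End.mul_apply, hu.f_apply, hu.e_apply,
    hu.e_apply, map_smul, hu.f_apply, Nat.add_sub_cancel]
  cases k with
  | zero => simp
  | succ k =>
    rw [Nat.add_sub_cancel]
    push_cast
    module

theorem lie_lie_e (hu : IsSl2String e f d u) : ⁅⁅e, f⁆, e⁆ = 2 • e := by
  refine hu.hom_ext fun k => ?_
  rw [Ring.lie_def, LinearMap.sub_apply, End.mul_apply, End.mul_apply, LinearMap.smul_apply,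
    hu.lie_apply, map_smul, hu.e_apply, map_smul, hu.lie_apply]
  cases k with
  | zero => simp
  | succ k =>
    rw [Nat.add_sub_cancel]
    push_cast
    module

theorem lie_lie_f (hu : IsSl2String e f d u) : ⁅⁅e, f⁆, f⁆ = -(2 • f) := by
  refine hu.hom_ext fun k => ?_
  rw [Ring.lie_def, LinearMap.sub_apply, End.mul_apply, End.mul_apply, LinearMap.neg_apply,
    LinearMap.smul_apply, hu.lie_apply, map_smul, hu.f_apply, hu.lie_apply]
  push_cast
  module

theorem casimir_eq (hu : IsSl2String e f d u) :
    (4 : R) • (e * f) + ⁅e, f⁆ * ⁅e, f⁆ - (2 : R) • ⁅e, f⁆ =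
      algebraMap R (End R M) (d ^ 2 - 1) := by
  refine hu.hom_ext fun k => ?_
  simp only [LinearMap.add_apply, LinearMap.sub_apply, LinearMap.smul_apply, End.mul_apply,
    hu.lie_apply, hu.f_apply, hu.e_apply, map_smul, Nat.add_sub_cancel,
    Module.algebraMap_end_apply]
  push_cast
  module

theorem pow_e_apply_eq_zero (hu : IsSl2String e f d u) {j k : ℕ} (h : j < k) :
    (e ^ k) (u j) = 0 := by
  induction k generalizing j with
  | zero => omega
  | succ k ih =>
    rw [pow_succ, End.mul_apply, hu.e_apply, map_smul]
    cases j with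
    | zero => simp
    | succ j => rw [Nat.add_sub_cancel, ih (by omega), smul_zero]

theorem pow_e_eq_zero (hu : IsSl2String e f d u) : e ^ d = 0 := by
  refine hu.hom_ext fun j => ?_
  rcases lt_or_ge j d with hj | hj
  · simpa using hu.pow_e_apply_eq_zero hj
  · simp [hu.eq_zero j hj]

theorem span_range_fin (hu : IsSl2String e f d u) :
    ⊤ ≤ span R (Set.range fun k : Fin d => u k) := by
  rw [← hu.span_range, span_le, Set.range_subset_iff]
  intro k
  rcases lt_or_ge k d with hk | hk
  · exact subset_span ⟨⟨k, hk⟩, rfl⟩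
  · simp [hu.eq_zero k hk]

end IsSl2String

section Standard

variable (R) (d : ℕ)

/-- The standard basis of `R ^ d`, prolonged by zero to all natural indices. -/
def stdString (k : ℕ) : Fin d → R := fun i => if (i : ℕ) = k then 1 else 0

/-- The raising operator of the standard `d`-dimensional representation of `sl₂`. -/
def stdE : End R (Fin d → R) :=
  (Pi.basisFun R (Fin d)).constr R fun i => (i * (d - i) : R) • stdString R d (i - 1)

/-- The lowering operator of the standard `d`-dimensional representation of `sl₂`. -/
def stdF : End R (Fin d → R) :=
  (Pi.basisFun R (Fin d)).constr R fun i => stdString R d (i + 1)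

variable {d} in
theorem stdString_val (i : Fin d) : stdString R d i = Pi.basisFun R (Fin d) i := by
  ext j
  simp [stdString, Pi.single_apply, Fin.ext_iff]

variable {d} in
theorem stdString_of_le {k : ℕ} (h : d ≤ k) : stdString R d k = 0 := by
  ext i
  simp [stdString, (i.isLt.trans_le h).ne]

theorem stdE_stdString (k : ℕ) :
    stdE R d (stdString R d k) = (k * (d - k) : R) • stdString R d (k - 1) := by
  rcases lt_trichotomy k d with hk | rfl | hk
  · exact (congrArg _ (stdString_val R ⟨k, hk⟩)).trans (Basis.constr_basis ..)
  · simp [stdString_of_le]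
  · simp [stdString_of_le, hk.le, Nat.le_sub_one_of_lt hk]

theorem stdF_stdString (k : ℕ) : stdF R d (stdString R d k) = stdString R d (k + 1) := by
  rcases lt_or_ge k d with hk | hk
  · exact (congrArg _ (stdString_val R ⟨k, hk⟩)).trans (Basis.constr_basis ..)
  · simp [stdString_of_le, hk, hk.trans k.le_succ]

theorem isSl2String_stdString [Nontrivial R] :
    IsSl2String (stdE R d) (stdF R d) d (stdString R d) where
  e_apply := stdE_stdString R d
  f_apply := stdF_stdString R d
  ne_zero k hk := stdString_val R ⟨k, hk⟩ ▸ (Pi.basisFun R (Fin d)).ne_zero _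
  eq_zero _ := stdString_of_le R
  span_range := by
    rw [eq_top_iff, ← (Pi.basisFun R (Fin d)).span_eq, span_le, Set.range_subset_iff]
    exact fun i => subset_span ⟨i, stdString_val R i⟩

end Standard

end CommRing

section Field

variable {K : Type*} [Field K] [CharZero K]
variable {V : Type*} [AddCommGroup V] [Module K V]

namespace IsSl2String

variable {V' : Type*} [AddCommGroup V'] [Module K V']
variable {e f : End K V} {d : ℕ} {u : ℕ → V}
variable {e' f' : End K V'} {u' : ℕ → V'}

theorem linearIndependent (hu : IsSl2String e f d u) :
    LinearIndependent K fun k : Fin d => u k := by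
  refine End.eigenvectors_linearIndependent' ⁅e, f⁆ (fun k : Fin d => (d - 1 - 2 * k : K))
    (fun i j h => ?_) _ fun k =>
      ⟨End.mem_eigenspace_iff.mpr (hu.lie_apply k), hu.ne_zero k k.isLt⟩
  simpa [Fin.val_inj] using h

/-- The basis of `V` formed by the nonzero terms of the string. -/
def basis (hu : IsSl2String e f d u) : Basis (Fin d) K V :=
  Basis.mk hu.linearIndependent hu.span_range_fin

theorem basis_apply (hu : IsSl2String e f d u) (k : Fin d) : hu.basis k = u k :=
  Basis.mk_apply _ _ k

theorem finrank_eq (hu : IsSl2String e f d u) : finrank K V = d := by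
  rw [finrank_eq_card_basis hu.basis, Fintype.card_fin]

theorem exists_linearEquiv (hu : IsSl2String e f d u) (hu' : IsSl2String e' f' d u') :
    ∃ T : V ≃ₗ[K] V', (∀ v, T (e v) = e' (T v)) ∧ ∀ v, T (f v) = f' (T v) := by
  let T := hu.basis.equiv hu'.basis (Equiv.refl _)
  have hT (k : ℕ) : T (u k) = u' k := by
    rcases lt_or_ge k d with hk | hk
    · simpa [basis_apply] using hu.basis.equiv_apply ⟨k, hk⟩ hu'.basis (Equiv.refl _)
    · rw [hu.eq_zero k hk, hu'.eq_zero k hk, map_zero]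
  have he : T.toLinearMap ∘ₗ e = e' ∘ₗ T.toLinearMap :=
    hu.hom_ext fun k => by simp [hu.e_apply, hu'.e_apply, hT]
  have hf : T.toLinearMap ∘ₗ f = f' ∘ₗ T.toLinearMap :=
    hu.hom_ext fun k => by simp [hu.f_apply, hu'.f_apply, hT]
  exact ⟨T, LinearMap.congr_fun he, LinearMap.congr_fun hf⟩

theorem basis_repr_f_mul_e (hu : IsSl2String e f d u) (v : V) (k : Fin d) :
    hu.basis.repr ((f * e) v) k = (k * (d - k) : K) * hu.basis.repr v k := by
  have h : hu.basis.coord k ∘ₗ (f * e) = (k * (d - k) : K) • hu.basis.coord k := by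
    refine hu.basis.ext fun j => ?_
    simp only [LinearMap.comp_apply, LinearMap.smul_apply, hu.basis_apply, hu.f_mul_e_apply,
      map_smul]
    rw [← hu.basis_apply, Basis.coord_apply, Basis.repr_self]
    rcases eq_or_ne j k with rfl | hjk
    · rfl
    · simp [hjk]
  exact LinearMap.congr_fun h v

-- The operator `f * e` is diagonal in the string basis.
theorem ker_e_le (hu : IsSl2String e f d u) : LinearMap.ker e ≤ span K {u 0} := by
  intro v hv
  rw [← hu.basis.sum_repr v]
  refine sum_mem fun k _ => ?_
  rcases Nat.eq_zero_or_pos (k : ℕ) with hk | hk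
  · rw [hu.basis_apply, hk]
    exact smul_mem _ _ (mem_span_singleton_self _)
  · have hcoef : (k * (d - k) : K) * hu.basis.repr v k = 0 := by
      rw [← hu.basis_repr_f_mul_e, End.mul_apply, LinearMap.mem_ker.mp hv]
      simp
    have hne : (k * (d - k) : K) ≠ 0 :=
      mul_ne_zero (Nat.cast_ne_zero.mpr hk.ne')
        (sub_ne_zero.mpr (Nat.cast_injective.ne k.isLt.ne'))
    rw [(mul_eq_zero.mp hcoef).resolve_left hne, zero_smul]
    exact zero_mem _

theorem actIrreducibly (hu : IsSl2String e f d u) (hd : d ≠ 0) : ActIrreducibly e f := by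
  refine ⟨⟨u 0, 0, hu.ne_zero 0 (Nat.pos_of_ne_zero hd)⟩, fun W hW => ?_⟩
  obtain ⟨he, hf⟩ := hW
  refine or_iff_not_imp_left.mpr fun hbot => ?_
  obtain ⟨v, hv, hv0⟩ := W.ne_bot_iff.mp hbot
  obtain ⟨n, hn, hn'⟩ := Nat.exists_not_and_succ_of_not_zero_of_exists
    (p := fun n => (e ^ n) v = 0) hv0 ⟨d, by simp [hu.pow_e_eq_zero]⟩
  obtain ⟨c, hc⟩ := mem_span_singleton.mp <| hu.ker_e_le (x := (e ^ n) v) <| by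
    rwa [LinearMap.mem_ker, ← End.mul_apply, ← pow_succ']
  have hpow : (e ^ n) v ∈ W := End.pow_apply_mem_of_forall_mem n he v hv
  have hzero : u 0 ∈ W := by
    rw [← hc] at hn hpow
    exact (W.smul_mem_iff fun h => hn (by simp [h])).mp hpow
  have hall (k : ℕ) : u k ∈ W := by
    induction k with
    | zero => exact hzero
    | succ k ih => exact hu.f_apply k ▸ hf ih
  rw [eq_top_iff, ← hu.span_range, span_le]
  exact Set.range_subset_iff.mpr hall

end IsSl2String

theorem exists_isSl2String [IsAlgClosed K] [FiniteDimensional K V]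
    {L : Type*} [LieRing L] [LieAlgebra K L] [LieRingModule L V] [LieModule K L V] {h e f : L}
    (t : IsSl2Triple h e f)
    (hirr : ActIrreducibly (LieModule.toEnd K L V e) (LieModule.toEnd K L V f)) :
    ∃ u, IsSl2String (LieModule.toEnd K L V e) (LieModule.toEnd K L V f) (finrank K V) u := by
  have := hirr.1
  obtain ⟨μ, v, -, hv⟩ := t.exists_hasPrimitiveVectorWith (R := K) (M := V)
  obtain ⟨n, hn⟩ := hv.exists_nat
  let u (k : ℕ) : V := (LieModule.toEnd K L V f ^ k) v
  have he (k : ℕ) : LieModule.toEnd K L V e (u k) =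
      (k * ((n + 1 : ℕ) - k) : K) • u (k - 1) := by
    cases k with
    | zero => simpa [u] using hv.lie_e
    | succ k => simpa [u, hn] using hv.lie_e_pow_succ_toEnd_f k
  have hf (k : ℕ) : LieModule.toEnd K L V f (u k) = u (k + 1) := hv.lie_f_pow_toEnd_f k
  have hu : IsSl2String (LieModule.toEnd K L V e) (LieModule.toEnd K L V f) (n + 1) u :=
    { e_apply := he
      f_apply := hf
      ne_zero := fun k hk => hv.pow_toEnd_f_ne_zero_of_eq_nat hn (Nat.lt_succ_iff.mp hk)
      eq_zero := fun k hk =>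
        End.pow_map_zero_of_le hk (hv.pow_toEnd_f_eq_zero_of_eq_nat hn)
      span_range := hirr.span_range_eq_top hv.ne_zero
        (fun k => he k ▸ smul_mem _ _ (subset_span ⟨_, rfl⟩))
        (fun k => hf k ▸ subset_span ⟨_, rfl⟩) }
  exact ⟨u, hu.finrank_eq.symm ▸ hu⟩

end Field

section Adjoin

variable {R A M : Type*} [CommSemiring R] [Semiring A] [Algebra R A] [AddCommMonoid M] [Module R M]

theorem mem_invtSubmodule_of_adjoin_eq_top {s : Set A} (hs : Algebra.adjoin R s = ⊤)
    (ρ : A →ₐ[R] End R M) {N : Submodule R M} (hW : ∀ a ∈ s, N ∈ (ρ a).invtSubmodule) (a : A) :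
    N ∈ (ρ a).invtSubmodule := by
  have ha : a ∈ Algebra.adjoin R s := hs ▸ Algebra.mem_top
  induction ha using Algebra.adjoin_induction with
  | mem a ha => exact hW a ha
  | algebraMap r =>
    intro v hv
    simpa using N.smul_mem r hv
  | add a b _ _ ha hb =>
    intro v hv
    simpa using N.add_mem (ha hv) (hb hv)
  | mul a b _ _ ha hb =>
    intro v hv
    simpa using ha (hb hv)

end Adjoin

/-- The triple `x`, `y`, `z` satisfies the defining relations of `U₁`, so that it
corresponds to a homomorphism `U1 →ₐ[ℂ] A`. -/
structure IsU1Triple {A : Type*} [Ring A] [Algebra ℂ A] (x y z : A) : Prop where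
  x_mul_y : x * y = y * x + 2 * z + (1 / 2 : ℂ) • 1
  y_mul_z : y * z = z * y - y
  z_mul_x : z * x = x * z - x

namespace IsU1Triple

variable {A B : Type*} [Ring A] [Algebra ℂ A] [Ring B] [Algebra ℂ B] {x y z : A}

theorem lie_y_neg_x (h : IsU1Triple x y z) : ⁅y, -x⁆ = 2 * z + (1 / 2 : ℂ) • 1 := by
  rw [Ring.lie_def, neg_mul, mul_neg, h.x_mul_y]
  abel

attribute [local instance] LieRing.ofAssociativeRing in
theorem isSl2Triple (h : IsU1Triple x y z) (hne : 2 * z + (1 / 2 : ℂ) • 1 ≠ 0) :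
    IsSl2Triple (2 * z + (1 / 2 : ℂ) • 1) y (-x) where
  h_ne_zero := hne
  lie_e_f := h.lie_y_neg_x
  lie_h_e_nsmul := by
    rw [Ring.lie_def, mul_add, add_mul, two_mul, mul_add, add_mul, h.y_mul_z, smul_mul_assoc,
      mul_smul_comm, one_mul, mul_one]
    abel
  lie_h_f_nsmul := by
    rw [Ring.lie_def, mul_neg, neg_mul, mul_add, add_mul, two_mul, mul_add, add_mul, h.z_mul_x,
      smul_mul_assoc, mul_smul_comm, one_mul, mul_one]
    abel

theorem z_eq (h : IsU1Triple x y z) : z = (1 / 2 : ℂ) • ⁅y, -x⁆ - (1 / 4 : ℂ) • 1 := by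
  rw [h.lie_y_neg_x, two_mul]
  module

theorem p_eq (h : IsU1Triple x y z) :
    z * z - (1 / 2 : ℂ) • z - y * x =
      (1 / 4 : ℂ) • ((4 : ℂ) • (y * -x) + ⁅y, -x⁆ * ⁅y, -x⁆ - (2 : ℂ) • ⁅y, -x⁆) +
        algebraMap ℂ A (3 / 16) := by
  rw [h.lie_y_neg_x, Algebra.algebraMap_eq_smul_one]
  simp only [two_mul, mul_add, add_mul, smul_mul_assoc, mul_smul_comm, mul_one, one_mul, mul_neg]
  module

theorem map (h : IsU1Triple x y z) (φ : A →ₐ[ℂ] B) : IsU1Triple (φ x) (φ y) (φ z) where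
  x_mul_y := by simpa [two_mul] using congrArg φ h.x_mul_y
  y_mul_z := by simpa using congrArg φ h.y_mul_z
  z_mul_x := by simpa using congrArg φ h.z_mul_x

theorem of_lie {e f : A} (he : ⁅⁅e, f⁆, e⁆ = 2 • e) (hf : ⁅⁅e, f⁆, f⁆ = -(2 • f)) :
    IsU1Triple (-f) e ((1 / 2 : ℂ) • ⁅e, f⁆ - (1 / 4 : ℂ) • 1) where
  x_mul_y := by
    rw [Ring.lie_def, neg_mul, mul_neg, two_mul]
    module
  y_mul_z := by
    have he' : ⁅e, f⁆ * e = e * ⁅e, f⁆ + 2 • e :=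
      sub_eq_iff_eq_add'.mp ((Ring.lie_def ⁅e, f⁆ e).symm.trans he)
    rw [mul_sub, sub_mul, mul_smul_comm, smul_mul_assoc, he', mul_smul_comm, smul_mul_assoc,
      one_mul, mul_one]
    module
  z_mul_x := by
    have hf' : ⁅e, f⁆ * f = f * ⁅e, f⁆ + -(2 • f) :=
      sub_eq_iff_eq_add'.mp ((Ring.lie_def ⁅e, f⁆ f).symm.trans hf)
    rw [mul_sub, sub_mul, mul_smul_comm, smul_mul_assoc, mul_neg, neg_mul, hf', mul_smul_comm,
      smul_mul_assoc, one_mul, mul_one]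
    module

end IsU1Triple

namespace U1

theorem isU1Triple : IsU1Triple U1x U1y U1z where
  x_mul_y := by simpa [U1x, U1y, U1z, two_mul] using RingQuot.mkAlgHom_rel ℂ U1Rel.rel_xy
  y_mul_z := by simpa [U1y, U1z] using RingQuot.mkAlgHom_rel ℂ U1Rel.rel_yz
  z_mul_x := by simpa [U1x, U1z] using RingQuot.mkAlgHom_rel ℂ U1Rel.rel_zx

theorem adjoin_y_neg_x : Algebra.adjoin ℂ {U1y, -U1x} = ⊤ := by
  set S := Algebra.adjoin ℂ {U1y, -U1x}
  have hy : U1y ∈ S := Algebra.subset_adjoin (by simp)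
  have hx' : -U1x ∈ S := Algebra.subset_adjoin (by simp)
  have hz : U1z ∈ S := by
    rw [isU1Triple.z_eq, Ring.lie_def]
    exact S.sub_mem (S.smul_mem (S.sub_mem (S.mul_mem hy hx') (S.mul_mem hx' hy)) _)
      (S.smul_mem S.one_mem _)
  rw [eq_top_iff, ← (AlgHom.range_eq_top _).mpr (RingQuot.mkAlgHom_surjective ℂ U1Rel),
    ← Algebra.map_top, ← FreeAlgebra.adjoin_range_ι, AlgHom.map_adjoin, Algebra.adjoin_le_iff]
  rintro _ ⟨_, ⟨i, rfl⟩, rfl⟩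
  fin_cases i
  exacts [neg_mem_iff.mp hx', hy, hz]

section Lift

variable {A : Type*} [Ring A] [Algebra ℂ A] {x y z : A}

/-- The homomorphism from `U₁` determined by a triple satisfying its defining relations. -/
def lift (h : IsU1Triple x y z) : U1 →ₐ[ℂ] A :=
  RingQuot.liftAlgHom ℂ ⟨FreeAlgebra.lift ℂ ![x, y, z], by
    rintro _ _ (_ | _ | _)
    · simpa [F3, two_mul] using h.x_mul_y
    · simpa [F3] using h.y_mul_z
    · simpa [F3] using h.z_mul_x⟩

theorem lift_x (h : IsU1Triple x y z) : lift h U1x = x := by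
  rw [lift, U1x, RingQuot.liftAlgHom_mkAlgHom_apply]
  simp [F3]

theorem lift_y (h : IsU1Triple x y z) : lift h U1y = y := by
  rw [lift, U1y, RingQuot.liftAlgHom_mkAlgHom_apply]
  simp [F3]

end Lift

/-- The standard `d`-dimensional representation of `U₁`, in which `y` and `-x` are the raising and
lowering operators. -/
def stdRep (d : ℕ) : U1 →ₐ[ℂ] End ℂ (Fin d → ℂ) :=
  lift <| .of_lie (isSl2String_stdString ℂ d).lie_lie_e (isSl2String_stdString ℂ d).lie_lie_f

theorem isSl2String_stdRep (d : ℕ) :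
    IsSl2String (stdRep d U1y) (stdRep d (-U1x)) d (stdString ℂ d) := by
  rw [stdRep, map_neg, lift_x, lift_y, neg_neg]
  exact isSl2String_stdString ℂ d

-- In the two-dimensional representation `2 * z + 1 / 2` acts as `diag(1, -1)`.
theorem two_mul_z_add_ne_zero : 2 * U1z + (1 / 2 : ℂ) • 1 ≠ 0 := by
  intro h
  have hu := isSl2String_stdRep 2
  have h0 : ⁅stdRep 2 U1y, stdRep 2 (-U1x)⁆ = 0 := by
    rw [map_neg, (isU1Triple.map (stdRep 2)).lie_y_neg_x]
    simpa [two_mul] using congrArg (stdRep 2) h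
  have hweight := hu.lie_apply 0
  rw [h0, LinearMap.zero_apply] at hweight
  refine hu.ne_zero 0 two_pos ((smul_eq_zero.mp hweight.symm).resolve_left ?_)
  norm_num

attribute [local instance] LieRing.ofAssociativeRing

theorem isSl2Triple : IsSl2Triple (2 * U1z + (1 / 2 : ℂ) • 1) U1y (-U1x) :=
  isU1Triple.isSl2Triple two_mul_z_add_ne_zero

theorem simpleRep_iff {d : ℕ} {ρ : U1 →ₐ[ℂ] End ℂ (Fin d → ℂ)} :
    SimpleRep U1 d ρ ↔ ActIrreducibly (ρ U1y) (ρ (-U1x)) := by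
  refine and_congr (nontrivial_iff_exists_ne 0).symm (forall_congr' fun W => imp_congr_left ?_)
  refine ⟨fun h => ⟨h U1y, h (-U1x)⟩, fun h => ?_⟩
  refine mem_invtSubmodule_of_adjoin_eq_top adjoin_y_neg_x ρ ?_
  rintro _ (rfl | rfl)
  exacts [h.1, h.2]

theorem simpleRep_stdRep {d : ℕ} (hd : d ≠ 0) : SimpleRep U1 d (stdRep d) :=
  simpleRep_iff.mpr ((isSl2String_stdRep d).actIrreducibly hd)

theorem exists_isSl2String_of_simpleRep {d : ℕ} {ρ : U1 →ₐ[ℂ] End ℂ (Fin d → ℂ)}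
    (hρ : SimpleRep U1 d ρ) : ∃ u, IsSl2String (ρ U1y) (ρ (-U1x)) d u := by
  let _ : LieRingModule U1 (Fin d → ℂ) := LieRingModule.compLieHom _ ρ.toLieHom
  have _ : LieModule ℂ U1 (Fin d → ℂ) := LieModule.compLieHom _ ρ.toLieHom
  have h := exists_isSl2String (K := ℂ) (V := Fin d → ℂ) isSl2Triple (simpleRep_iff.mp hρ)
  rwa [finrank_fin_fun] at h

theorem map_U1p_sub_eq_zero_of_simpleRep {d : ℕ} {ρ : U1 →ₐ[ℂ] End ℂ (Fin d → ℂ)}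
    (hρ : SimpleRep U1 d ρ) :
    ρ (U1p - algebraMap ℂ U1 ((4 * (d : ℂ) ^ 2 - 1) / 16)) = 0 := by
  obtain ⟨u, hu⟩ := exists_isSl2String_of_simpleRep hρ
  have hp : ρ U1p = algebraMap ℂ _ ((4 * (d : ℂ) ^ 2 - 1) / 16) := by
    have hcasimir := hu.casimir_eq
    rw [map_neg] at hcasimir
    rw [U1p, map_sub, map_sub, map_mul, map_mul, map_smul, (isU1Triple.map ρ).p_eq, hcasimir]
    simp only [Algebra.algebraMap_eq_smul_one]
    module
  rw [map_sub, hp, AlgHom.commutes, sub_self]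

theorem exists_linearEquiv_of_simpleRep {d : ℕ} {ρ₁ ρ₂ : U1 →ₐ[ℂ] End ℂ (Fin d → ℂ)}
    (h₁ : SimpleRep U1 d ρ₁) (h₂ : SimpleRep U1 d ρ₂) :
    ∃ T : (Fin d → ℂ) ≃ₗ[ℂ] (Fin d → ℂ), ∀ a v, T (ρ₁ a v) = ρ₂ a (T v) := by
  obtain ⟨u₁, hu₁⟩ := exists_isSl2String_of_simpleRep h₁
  obtain ⟨u₂, hu₂⟩ := exists_isSl2String_of_simpleRep h₂
  obtain ⟨T, hy, hx⟩ := hu₁.exists_linearEquiv hu₂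
  have hT : (T.conjAlgEquiv ℂ).toAlgHom.comp ρ₁ = ρ₂ := by
    refine AlgHom.ext_of_adjoin_eq_top adjoin_y_neg_x ?_
    rintro _ (rfl | rfl) <;> refine LinearMap.ext fun v => ?_
    · simpa using hy (T.symm v)
    · simpa using hx (T.symm v)
  exact ⟨T, fun a v => by simp [← hT]⟩

end U1

/-- `U₁` is 1-homogeneous: for each `d ≥ 1` there is, up to
isomorphism, exactly one simple `U₁`-module of ℂ-dimension `d`, and it is annihilated
by `p − σ_d` where `σ_d = (4d² − 1)/16`. -/
theorem stmt9 :
    ∀ d : ℕ, 1 ≤ d →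
      (∃ ρ : U1 →ₐ[ℂ] Module.End ℂ (Fin d → ℂ), SimpleRep U1 d ρ ∧
        ρ (U1p - algebraMap ℂ U1 ((4 * (d : ℂ) ^ 2 - 1) / 16)) = 0) ∧
      (∀ ρ₁ ρ₂ : U1 →ₐ[ℂ] Module.End ℂ (Fin d → ℂ),
        SimpleRep U1 d ρ₁ → SimpleRep U1 d ρ₂ →
        ∃ e : (Fin d → ℂ) ≃ₗ[ℂ] (Fin d → ℂ),
          ∀ (a : U1) (v : Fin d → ℂ), e (ρ₁ a v) = ρ₂ a (e v)) := by
  intro d hd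
  have hstd := U1.simpleRep_stdRep (Nat.one_le_iff_ne_zero.mp hd)
  exact ⟨⟨U1.stdRep d, hstd, U1.map_U1p_sub_eq_zero_of_simpleRep hstd⟩,
    fun _ _ => U1.exists_linearEquiv_of_simpleRep⟩

end
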